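/- arXiv:1305.1143 — 4 statements merged into one kernel-verified Lean document; each statement's English description precedes it below -/
import Mathlib

section
/- Let n ≥ 1, let χ be a function from the symmetric group S_n to ℂ, and let A ∈ M_n(ℂ). For every X ∈ M_n(ℂ), the directional derivative of the immanant map at A in the direction X satisfies D d_χ(A)(X) = tr(adj_χ(A)^T · X). -/
open scoped Classical
open Matrix

attribute [local instance] Matrix.normedAddCommGroup Matrix.normedSpace

noncomputable section

/-- The immanant `d_χ(A) = ∑_{σ ∈ S_n} χ(σ) ∏_i a_{i σ(i)}`. -/
def imm {n : ℕ} (χ : Equiv.Perm (Fin n) → ℂ) (A : Matrix (Fin n) (Fin n) ℂ) : ℂ :=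
  ∑ σ : Equiv.Perm (Fin n), χ σ * ∏ i, A i (σ i)

/-- `A(i|j)`: replace row `i` and column `j` of `A` by zeros, except the `(i,j)` entry,
which is set to `1`. -/
def unitRowCol {n : ℕ} (A : Matrix (Fin n) (Fin n) ℂ) (i j : Fin n) :
    Matrix (Fin n) (Fin n) ℂ :=
  Matrix.of fun p q => if p = i then (if q = j then 1 else 0) else if q = j then 0 else A p q

/-- The immanantal adjoint: its `(i,j)` entry is `d_χ(A(i|j))`. -/
def immAdj {n : ℕ} (χ : Equiv.Perm (Fin n) → ℂ) (A : Matrix (Fin n) (Fin n) ℂ) :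
    Matrix (Fin n) (Fin n) ℂ :=
  Matrix.of fun i j => imm χ (unitRowCol A i j)

/-- `A(j;X)`: replace the `j`-th column of `A` by the `j`-th column of `X`. -/
def replCol {n : ℕ} (A X : Matrix (Fin n) (Fin n) ℂ) (j : Fin n) :
    Matrix (Fin n) (Fin n) ℂ :=
  Matrix.of fun p q => if q = j then X p q else A p q

/-- `Q_{k,n}`: the strictly increasing maps from `Fin k` to `Fin n`. -/
def Qset (k n : ℕ) : Finset (Fin k → Fin n) := Finset.univ.filter StrictMono

/-- `A(α ; X^1, …, X^k)`: replace, for each `l`, the `α(l)`-th column of `A` by the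
`α(l)`-th column of `X^l`. -/
def replCols {n k : ℕ} (A : Matrix (Fin n) (Fin n) ℂ) (α : Fin k → Fin n)
    (X : Fin k → Matrix (Fin n) (Fin n) ℂ) : Matrix (Fin n) (Fin n) ℂ :=
  Matrix.of fun p q => if h : ∃ l, α l = q then X (Classical.choose h) p q else A p q

/-- The mixed immanant `Δ_χ(Y^1, …, Y^n)`. -/
def mixedImm {n : ℕ} (χ : Equiv.Perm (Fin n) → ℂ)
    (Y : Fin n → Matrix (Fin n) (Fin n) ℂ) : ℂ :=
  ((n.factorial : ℂ))⁻¹ * ∑ σ : Equiv.Perm (Fin n), imm χ (Matrix.of fun p q => Y (σ q) p q)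

/-- The family `(A, …, A, X^1, …, X^k)` with `n - k` copies of `A`. -/
def padFam {n k : ℕ} (A : Matrix (Fin n) (Fin n) ℂ) (X : Fin k → Matrix (Fin n) (Fin n) ℂ) :
    Fin n → Matrix (Fin n) (Fin n) ℂ :=
  fun i => if h : (i : ℕ) < n - k then A else X ⟨(i : ℕ) - (n - k), by have := i.isLt; omega⟩

/-- The increasing enumeration `ᾱ` of the complement of the range of `α`. -/
def complEnum {n k : ℕ} (α : Fin k → Fin n) : Fin (n - k) → Fin n :=
  if h : (Finset.univ.filter fun j => j ∉ Set.range α).card = n - k then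
    (Finset.univ.filter fun j => j ∉ Set.range α).orderEmbOfFin h
  else fun i => ⟨0, by have := i.isLt; omega⟩

/-- `X(α|β)`: the submatrix obtained by deleting rows `α(1), …, α(k)` and columns
`β(1), …, β(k)`. -/
def delSub {n k : ℕ} (X : Matrix (Fin n) (Fin n) ℂ) (α β : Fin k → Fin n) :
    Matrix (Fin (n - k)) (Fin (n - k)) ℂ :=
  X.submatrix (complEnum α) (complEnum β)

/-- `A ⊕_{α|β} B`. -/
def dSum {n k : ℕ} (α β : Fin k → Fin n) (A : Matrix (Fin k) (Fin k) ℂ)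
    (B : Matrix (Fin (n - k)) (Fin (n - k)) ℂ) : Matrix (Fin n) (Fin n) ℂ :=
  Matrix.of fun i j =>
    if hi : ∃ p, α p = i then
      (if hj : ∃ q, β q = j then A (Classical.choose hi) (Classical.choose hj) else 0)
    else if _hj : ∃ q, β q = j then 0
    else if hi' : ∃ p, complEnum α p = i then
      (if hj' : ∃ q, complEnum β q = j then B (Classical.choose hi') (Classical.choose hj')
       else 0)
    else 0

/-- `X{α|β}`: zero out the entries `(i,j)` with `i ∈ Im α, j ∉ Im β` and those with
`i ∉ Im α, j ∈ Im β`. -/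
def maskM {n k : ℕ} (X : Matrix (Fin n) (Fin n) ℂ) (α β : Fin k → Fin n) :
    Matrix (Fin n) (Fin n) ℂ :=
  Matrix.of fun i j =>
    if ((∃ p, α p = i) ∧ ¬ (∃ q, β q = j)) ∨ (¬ (∃ p, α p = i) ∧ (∃ q, β q = j)) then 0
    else X i j

/-- `X^σ_β`: the matrix whose `β(p)`-th column is the `β(p)`-th column of `X^{σ(p)}`,
all other columns being zero. -/
def zRepl {n k : ℕ} (β : Fin k → Fin n) (σ : Equiv.Perm (Fin k))
    (X : Fin k → Matrix (Fin n) (Fin n) ℂ) : Matrix (Fin n) (Fin n) ℂ :=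
  Matrix.of fun p q => if h : ∃ l, β l = q then X (σ (Classical.choose h)) p q else 0

/-- `|α| = α(1) + ⋯ + α(k)` (with `1`-based values). -/
def wt {k n : ℕ} (α : Fin k → Fin n) : ℕ := ∑ l, ((α l : ℕ) + 1)

/-- The mixed discriminant `Δ(B^1, …, B^k)`. -/
def mixedDisc {k : ℕ} (B : Fin k → Matrix (Fin k) (Fin k) ℂ) : ℂ :=
  ((k.factorial : ℂ))⁻¹ * ∑ σ : Equiv.Perm (Fin k), (Matrix.of fun p q => B (σ q) p q).det

/-- `A{id|β}`: zero out the entries of the first `k` rows in the columns outside `Im β`,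
and the entries of the remaining rows in the columns of `Im β`. -/
def maskId {n k : ℕ} (A : Matrix (Fin n) (Fin n) ℂ) (β : Fin k → Fin n) :
    Matrix (Fin n) (Fin n) ℂ :=
  Matrix.of fun i j =>
    if ((i : ℕ) < k ∧ j ∉ Set.range β) ∨ (k ≤ (i : ℕ) ∧ j ∈ Set.range β) then 0 else A i j

/-- The `m`-th compound of an `n × n` matrix, with rows and columns indexed by `Q_{m,n}`. -/
def compound (m n : ℕ) (A : Matrix (Fin n) (Fin n) ℂ) :
    Matrix {α : Fin m → Fin n // StrictMono α} {α : Fin m → Fin n // StrictMono α} ℂ :=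
  Matrix.of fun α β => (A.submatrix α.1 β.1).det

end

/-- Only the permutations sending `i` to `j` contribute to the immanant of `A(i|j)`. -/
theorem prod_unitRowCol {n : ℕ} (A : Matrix (Fin n) (Fin n) ℂ) (i j : Fin n)
    (σ : Equiv.Perm (Fin n)) :
    ∏ p, unitRowCol A i j p (σ p) =
      if σ i = j then ∏ p ∈ Finset.univ.erase i, A p (σ p) else 0 := by
  rw [← Finset.mul_prod_erase _ _ (Finset.mem_univ i)]
  split_ifs with h
  · subst h
    rw [show unitRowCol A i (σ i) i (σ i) = 1 by simp [unitRowCol], one_mul]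
    refine Finset.prod_congr rfl fun p hp => ?_
    simp [unitRowCol, Finset.ne_of_mem_erase hp]
  · simp [unitRowCol, h]

/-- The derivative of the immanant, by the product rule applied to each monomial. -/
theorem hasFDerivAt_imm {n : ℕ} (χ : Equiv.Perm (Fin n) → ℂ) (A : Matrix (Fin n) (Fin n) ℂ) :
    HasFDerivAt (imm χ)
      (∑ σ : Equiv.Perm (Fin n), χ σ • ∑ i, (∏ p ∈ Finset.univ.erase i, A p (σ p)) •
        (Matrix.entryLinearMap ℂ ℂ i (σ i)).toContinuousLinearMap) A := by
  unfold imm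
  refine HasFDerivAt.fun_sum fun σ _ => HasFDerivAt.const_mul ?_ (χ σ)
  exact HasFDerivAt.finsetProd fun i _ =>
    (Matrix.entryLinearMap ℂ ℂ i (σ i)).toContinuousLinearMap.hasFDerivAt

/-- The pairing of the immanantal adjoint with `X`, expanded over permutations. -/
theorem trace_transpose_immAdj_mul {n : ℕ} (χ : Equiv.Perm (Fin n) → ℂ)
    (A X : Matrix (Fin n) (Fin n) ℂ) :
    Matrix.trace ((immAdj χ A)ᵀ * X) =
      ∑ σ : Equiv.Perm (Fin n), χ σ * ∑ i,
        (∏ p ∈ Finset.univ.erase i, A p (σ p)) * X i (σ i) := by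
  simp only [Matrix.trace, Matrix.diag_apply, Matrix.mul_apply, Matrix.transpose_apply, immAdj,
    Matrix.of_apply, imm, prod_unitRowCol, Finset.sum_mul, Finset.mul_sum]
  rw [Finset.sum_comm, Finset.sum_comm (s := (Finset.univ : Finset (Equiv.Perm (Fin n))))]
  refine Finset.sum_congr rfl fun i _ => ?_
  rw [Finset.sum_comm]
  refine Finset.sum_congr rfl fun σ _ => ?_
  simp [mul_assoc]

/-- For every `X`, the directional derivative of the immanant at `A`
in the direction `X` is `tr(adj_χ(A)ᵀ ⬝ X)`. -/
theorem immanant_deriv_trace_adj (n : ℕ) (hn : 1 ≤ n) (χ : Equiv.Perm (Fin n) → ℂ)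
    (A : Matrix (Fin n) (Fin n) ℂ) :
    ∀ X : Matrix (Fin n) (Fin n) ℂ,
      fderiv ℂ (imm χ) A X = Matrix.trace ((immAdj χ A)ᵀ * X) := by
  intro X
  rw [(hasFDerivAt_imm χ A).fderiv, trace_transpose_immAdj_mul]
  simp
end

section
/- (First expression.) Let n ≥ 1, let χ be a function from the symmetric group S_n to ℂ, let 1 ≤ k ≤ n, and let A, X^1, …, X^k ∈ M_n(ℂ). Then the k-th directional derivative of the immanant satisfies D^k d_χ(A)(X^1,…,X^k) = Σ_{σ∈S_k} Σ_{α∈Q_{k,n}} d_χ(A(α; X^{σ(1)},…,X^{σ(k)})). In particular, D^k d_χ(A)(X,…,X) = k! · Σ_{α∈Q_{k,n}} d_χ(A(α; X,…,X)). -/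
open scoped Classical

attribute [local instance] Matrix.normedAddCommGroup Matrix.normedSpace

noncomputable section

lemma replCols_apply_self {n k : ℕ} (A : Matrix (Fin n) (Fin n) ℂ) {α : Fin k → Fin n}
    (hα : Function.Injective α) (X : Fin k → Matrix (Fin n) (Fin n) ℂ) (p : Fin n) (l : Fin k) :
    replCols A α X p (α l) = X l p (α l) := by
  have h : ∃ l', α l' = α l := ⟨l, rfl⟩
  simp only [replCols, Matrix.of_apply, dif_pos h]
  rw [hα (Classical.choose_spec h)]

lemma replCols_apply_of_notMem {n k : ℕ} (A : Matrix (Fin n) (Fin n) ℂ) {α : Fin k → Fin n}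
    (X : Fin k → Matrix (Fin n) (Fin n) ℂ) (p : Fin n) {q : Fin n} (hq : q ∉ Set.range α) :
    replCols A α X p q = A p q := by
  simp only [replCols, Matrix.of_apply]
  exact dif_neg hq

/-- Permuting the replacement matrices amounts to permuting the column indices. -/
lemma replCols_comp_perm {n k : ℕ} (A : Matrix (Fin n) (Fin n) ℂ) {α : Fin k → Fin n}
    (hα : Function.Injective α) (X : Fin k → Matrix (Fin n) (Fin n) ℂ)
    (σ : Equiv.Perm (Fin k)) :
    replCols A α (fun l => X (σ l)) = replCols A (α ∘ σ.symm) X := by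
  ext p q
  by_cases hq : q ∈ Set.range α
  · obtain ⟨l, rfl⟩ := hq
    have h := replCols_apply_self A (hα.comp σ.symm.injective) X p (σ l)
    simp only [Function.comp_apply, Equiv.symm_apply_apply] at h
    rw [replCols_apply_self A hα, h]
  · rw [replCols_apply_of_notMem A _ p hq, replCols_apply_of_notMem]
    rwa [σ.symm.surjective.range_comp]

/-- Every injection of `Fin k` into `Fin n` factors uniquely as a strictly increasing map after
a permutation. -/
lemma sum_embedding_eq_sum_perm_sum_Qset {M : Type*} [AddCommMonoid M] {n k : ℕ}
    (F : (Fin k → Fin n) → M) :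
    ∑ e : Fin k ↪ Fin n, F e =
      ∑ σ : Equiv.Perm (Fin k), ∑ α ∈ Qset k n, F (α ∘ σ.symm) := by
  rw [← Finset.sum_product']
  symm
  have hmono : ∀ a ∈ (Finset.univ : Finset (Equiv.Perm (Fin k))) ×ˢ Qset k n,
      StrictMono a.2 := by
    intro a ha
    simpa [Qset] using ha
  refine Finset.sum_bij
    (fun a ha => ⟨a.2 ∘ a.1.symm, (hmono a ha).injective.comp a.1.symm.injective⟩)
    (fun _ _ => Finset.mem_univ _) ?_ ?_ (fun _ _ => rfl)
  · rintro ⟨σ, α⟩ ha ⟨τ, β⟩ hb hab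
    have hα : StrictMono α := hmono _ ha
    have hβ : StrictMono β := hmono _ hb
    have hcomp : α ∘ σ.symm = β ∘ τ.symm := congrArg DFunLike.coe hab
    obtain rfl : α = β := by
      refine (hα.range_inj hβ).1 ?_
      rw [← σ.symm.surjective.range_comp α, hcomp, τ.symm.surjective.range_comp]
    have hsymm : σ.symm = τ.symm := Equiv.ext fun l => hα.injective (congrFun hcomp l)
    rw [Equiv.symm_bijective.injective hsymm]
  · intro e _
    refine ⟨(Tuple.sort e, e ∘ Tuple.sort e), ?_, ?_⟩
    · simpa [Qset] using (Tuple.monotone_sort e).strictMono_of_injective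
        (e.injective.comp (Tuple.sort e).injective)
    · ext l
      simp

/-- The immanant as a continuous multilinear function of the columns. -/
def immMultilinear {n : ℕ} (χ : Equiv.Perm (Fin n) → ℂ) :
    ContinuousMultilinearMap ℂ (fun _ : Fin n => Fin n → ℂ) ℂ :=
  ∑ σ : Equiv.Perm (Fin n), χ σ •
    (ContinuousMultilinearMap.mkPiAlgebra ℂ (Fin n) ℂ).compContinuousLinearMap
      (fun j => ContinuousLinearMap.proj (R := ℂ) (φ := fun _ : Fin n => ℂ) (σ.symm j))

lemma immMultilinear_apply {n : ℕ} (χ : Equiv.Perm (Fin n) → ℂ) (c : Fin n → Fin n → ℂ) :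
    immMultilinear χ c = imm χ (Matrix.of fun p q => c q p) := by
  simp only [immMultilinear, imm, _root_.sum_apply,
    _root_.smul_apply, ContinuousMultilinearMap.compContinuousLinearMap_apply,
    ContinuousMultilinearMap.mkPiAlgebra_apply, ContinuousLinearMap.proj_apply, smul_eq_mul,
    Matrix.of_apply]
  refine Finset.sum_congr rfl fun σ _ => ?_
  rw [← Equiv.prod_comp σ]
  simp

/-- The continuous linear map sending a matrix to the family of its columns. -/
def colsL (n : ℕ) : Matrix (Fin n) (Fin n) ℂ →L[ℂ] (Fin n → Fin n → ℂ) :=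
  LinearMap.toContinuousLinearMap
    { toFun := fun A q p => A p q
      map_add' := fun _ _ => rfl
      map_smul' := fun _ _ => rfl }

lemma colsL_apply {n : ℕ} (A : Matrix (Fin n) (Fin n) ℂ) (p q : Fin n) :
    colsL n A q p = A p q := rfl

lemma imm_eq_immMultilinear_comp_colsL {n : ℕ} (χ : Equiv.Perm (Fin n) → ℂ) :
    imm χ = immMultilinear χ ∘ colsL n := by
  funext A
  rw [Function.comp_apply, immMultilinear_apply]
  rfl

lemma iteratedFDeriv_imm_apply {n k : ℕ} (χ : Equiv.Perm (Fin n) → ℂ)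
    (A : Matrix (Fin n) (Fin n) ℂ) (X : Fin k → Matrix (Fin n) (Fin n) ℂ) :
    iteratedFDeriv ℂ k (imm χ) A X = ∑ e : Fin k ↪ Fin n, imm χ (replCols A e X) := by
  have hcomp := (colsL n).iteratedFDeriv_comp_right (immMultilinear χ).contDiff A
    (i := k) le_rfl
  rw [imm_eq_immMultilinear_comp_colsL]
  refine (congrArg (fun f => f X) hcomp).trans ?_
  rw [(immMultilinear χ).iteratedFDeriv_eq]
  change (immMultilinear χ).iteratedFDeriv k (colsL n A) (fun i => colsL n (X i)) = _
  simp only [ContinuousMultilinearMap.iteratedFDeriv, _root_.sum_apply,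
    ContinuousMultilinearMap.iteratedFDerivComponent_apply, Pi.compRightL_apply]
  refine Finset.sum_congr rfl fun e _ => ?_
  rw [Function.comp_apply]
  congr 1
  funext q
  by_cases hq : q ∈ Set.range e
  · obtain ⟨l, rfl⟩ := hq
    funext p
    rw [colsL_apply, replCols_apply_self A e.injective]
    simp [colsL_apply]
  · funext p
    rw [colsL_apply, replCols_apply_of_notMem A X p hq, dif_neg hq, colsL_apply]

end

/-- First expression. For `1 ≤ k ≤ n`,
`D^k d_χ(A)(X^1, …, X^k) = ∑_{σ ∈ S_k} ∑_{α ∈ Q_{k,n}} d_χ(A(α; X^{σ(1)}, …, X^{σ(k)}))`;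
in particular `D^k d_χ(A)(X, …, X) = k! ∑_{α ∈ Q_{k,n}} d_χ(A(α; X, …, X))`. -/
theorem immanant_higher_deriv_first_expression (n k : ℕ) (hk : 1 ≤ k) (hkn : k ≤ n)
    (χ : Equiv.Perm (Fin n) → ℂ) (A : Matrix (Fin n) (Fin n) ℂ)
    (X : Fin k → Matrix (Fin n) (Fin n) ℂ) :
    (iteratedFDeriv ℂ k (imm χ) A (fun i => X i) =
      ∑ σ : Equiv.Perm (Fin k), ∑ α ∈ Qset k n, imm χ (replCols A α (fun l => X (σ l)))) ∧
    ∀ Y : Matrix (Fin n) (Fin n) ℂ,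
      iteratedFDeriv ℂ k (imm χ) A (fun _ => Y) =
        (k.factorial : ℂ) * ∑ α ∈ Qset k n, imm χ (replCols A α (fun _ => Y)) := by
  have main : ∀ Z : Fin k → Matrix (Fin n) (Fin n) ℂ, iteratedFDeriv ℂ k (imm χ) A Z =
      ∑ σ : Equiv.Perm (Fin k), ∑ α ∈ Qset k n, imm χ (replCols A α (fun l => Z (σ l))) := by
    intro Z
    rw [iteratedFDeriv_imm_apply,
      sum_embedding_eq_sum_perm_sum_Qset (fun e => imm χ (replCols A e Z))]
    refine Finset.sum_congr rfl fun σ _ => Finset.sum_congr rfl fun α hα => ?_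
    have hmono : StrictMono α := by simpa [Qset] using hα
    rw [replCols_comp_perm A hmono.injective]
  refine ⟨main X, fun Y => ?_⟩
  rw [main, Finset.sum_const, Finset.card_univ, Fintype.card_perm, Fintype.card_fin,
    nsmul_eq_mul]
end

section
/- (Laplace expansion for immanants.) Let 1 ≤ k ≤ n, let χ be a function from S_n to ℂ, let X ∈ M_n(ℂ), and fix α ∈ Q_{k,n}. Then d_χ(X) = Σ_{β∈Q_{k,n}} d_χ(X{α|β}), where X{α|β} is obtained from X by setting to zero every entry (i,j) with i ∈ Im α and j ∉ Im β, and every entry (i,j) with i ∉ Im α and j ∈ Im β; equivalently, d_χ(X) = Σ_{β∈Q_{k,n}} d_χ(X[α|β] ⊕_{α|β} X(α|β)). -/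
open scoped Classical

attribute [local instance] Matrix.normedAddCommGroup Matrix.normedSpace

/-- The entries of `X{α|β}` along `σ` multiply to those of `X` if `σ` maps `Im α` onto `Im β`,
and to zero otherwise. -/
lemma prod_maskM {n k : ℕ} (X : Matrix (Fin n) (Fin n) ℂ) (α β : Fin k → Fin n)
    (σ : Equiv.Perm (Fin n)) :
    ∏ i, maskM X α β i (σ i) =
      if Set.range β = Set.range (σ ∘ α) then ∏ i, X i (σ i) else 0 := by
  have key : Set.range β = Set.range (σ ∘ α) ↔ ∀ i, (∃ p, α p = i) ↔ ∃ q, β q = σ i := by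
    simp only [Set.ext_iff, Set.mem_range, Function.comp_apply]
    rw [← σ.forall_congr_right]
    simp only [σ.injective.eq_iff]
    exact forall_congr' fun _ => Iff.comm
  split_ifs with h
  · rw [key] at h
    refine Finset.prod_congr rfl fun i _ => ?_
    have hi := h i
    rw [maskM, Matrix.of_apply, if_neg (by tauto)]
  · rw [key] at h
    obtain ⟨i, hi⟩ := not_forall.mp h
    refine Finset.prod_eq_zero (Finset.mem_univ i) ?_
    rw [maskM, Matrix.of_apply, if_pos (by tauto)]

/-- Every injective map has the same range as a unique strictly increasing map. -/
lemma existsUnique_mem_Qset_range_eq {n k : ℕ} (f : Fin k → Fin n) (hf : Function.Injective f) :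
    ∃! β, β ∈ Qset k n ∧ Set.range β = Set.range f := by
  have hcard : (Finset.univ.image f).card = k := by
    rw [Finset.card_image_of_injective _ hf, Finset.card_univ, Fintype.card_fin]
  refine ⟨(Finset.univ.image f).orderEmbOfFin hcard, ⟨?_, ?_⟩, ?_⟩
  · simp only [Qset, Finset.mem_filter, Finset.mem_univ, true_and]
    exact OrderEmbedding.strictMono _
  · rw [Finset.range_orderEmbOfFin]
    simp
  · rintro β ⟨hβ, hr⟩
    simp only [Qset, Finset.mem_filter, Finset.mem_univ, true_and] at hβ
    refine Finset.orderEmbOfFin_unique hcard (fun x => ?_) hβ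
    have hx : β x ∈ Set.range f := hr ▸ Set.mem_range_self x
    simpa using hx

lemma imm_eq_sum_imm_maskM {n k : ℕ} (χ : Equiv.Perm (Fin n) → ℂ)
    (X : Matrix (Fin n) (Fin n) ℂ) (α : Fin k → Fin n) (hα : Function.Injective α) :
    imm χ X = ∑ β ∈ Qset k n, imm χ (maskM X α β) := by
  simp only [imm]
  rw [Finset.sum_comm]
  refine Finset.sum_congr rfl fun σ _ => ?_
  obtain ⟨β₀, ⟨hβ₀, hr⟩, huniq⟩ :=
    existsUnique_mem_Qset_range_eq (σ ∘ α) (σ.injective.comp hα)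
  rw [Finset.sum_eq_single_of_mem β₀ hβ₀, prod_maskM, if_pos hr]
  intro β hβ hne
  rw [prod_maskM, if_neg fun h => hne (huniq β ⟨hβ, h⟩), mul_zero]

lemma exists_complEnum_eq {n k : ℕ} {α : Fin k → Fin n} (hα : Function.Injective α) {i : Fin n}
    (hi : ¬ ∃ p, α p = i) : ∃ p, complEnum α p = i := by
  have hcard : (Finset.univ.filter fun j => j ∉ Set.range α).card = n - k := by
    have hcompl : (Finset.univ.filter fun j => j ∉ Set.range α) = (Finset.univ.image α)ᶜ := by
      ext j
      simp
    rw [hcompl, Finset.card_compl, Finset.card_image_of_injective _ hα]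
    simp
  rw [complEnum, dif_pos hcard]
  change i ∈ Set.range _
  rw [Finset.range_orderEmbOfFin]
  simpa using hi

lemma dSum_submatrix_delSub {n k : ℕ} (X : Matrix (Fin n) (Fin n) ℂ) {α β : Fin k → Fin n}
    (hα : Function.Injective α) (hβ : Function.Injective β) :
    dSum α β (X.submatrix α β) (delSub X α β) = maskM X α β := by
  ext i j
  simp only [dSum, maskM, delSub, Matrix.of_apply, Matrix.submatrix_apply]
  by_cases hi : ∃ p, α p = i <;> by_cases hj : ∃ q, β q = j
  · rw [dif_pos hi, dif_pos hj, if_neg (by tauto), Classical.choose_spec hi,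
      Classical.choose_spec hj]
  · rw [dif_pos hi, dif_neg hj, if_pos (by tauto)]
  · rw [dif_neg hi, dif_pos hj, if_pos (by tauto)]
  · have hi' := exists_complEnum_eq hα hi
    have hj' := exists_complEnum_eq hβ hj
    rw [dif_neg hi, dif_neg hj, dif_pos hi', dif_pos hj', if_neg (by tauto),
      Classical.choose_spec hi', Classical.choose_spec hj']

/-- Laplace expansion for immanants. For fixed `α ∈ Q_{k,n}`,
`d_χ(X) = ∑_{β ∈ Q_{k,n}} d_χ(X{α|β}) = ∑_{β ∈ Q_{k,n}} d_χ(X[α|β] ⊕_{α|β} X(α|β))`. -/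
theorem immanant_laplace_expansion (n k : ℕ) (hk : 1 ≤ k) (hkn : k ≤ n)
    (χ : Equiv.Perm (Fin n) → ℂ) (X : Matrix (Fin n) (Fin n) ℂ)
    (α : Fin k → Fin n) (hα : StrictMono α) :
    imm χ X = ∑ β ∈ Qset k n, imm χ (maskM X α β) ∧
    imm χ X = ∑ β ∈ Qset k n, imm χ (dSum α β (X.submatrix α β) (delSub X α β)) := by
  have hmask := imm_eq_sum_imm_maskM χ X α hα.injective
  refine ⟨hmask, hmask.trans (Finset.sum_congr rfl fun β hβ => ?_)⟩
  have hβ' : StrictMono β := (Finset.mem_filter.mp hβ).2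
  rw [dSum_submatrix_delSub X hα.injective hβ'.injective]
end

section
/- (Jain's formula for the derivative of the m-th compound, derived in the paper.) Let 1 ≤ k ≤ m ≤ n and let A, X^1, …, X^k ∈ M_n(ℂ). For the m-th compound map ∧^m : M_n(ℂ) → M_{C(n,m)}(ℂ), the (α,β) entry (α, β ∈ Q_{m,n}) of the k-th directional derivative D^k ∧^m(A)(X^1,…,X^k) equals k! · Σ_{ρ,τ∈Q_{k,m}} (−1)^{|ρ|+|τ|} det(A[α|β](ρ|τ)) · Δ(X^1[α|β][ρ|τ], …, X^k[α|β][ρ|τ]), where Δ denotes the mixed discriminant of k matrices of order k. -/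
open scoped Classical

attribute [local instance] Matrix.normedAddCommGroup Matrix.normedSpace

noncomputable section Laplace

open Finset Equiv

variable {k m : ℕ}

/-- The sum over embeddings `Fin k ↪ Fin m` splits as a sum over increasing maps and
permutations of the source. -/
lemma sum_embedding_eq_sum_strictMono_perm {M : Type*} [AddCommMonoid M]
    (F : (Fin k → Fin m) → M) :
    ∑ e : Fin k ↪ Fin m, F e = ∑ τ ∈ Qset k m, ∑ σ : Perm (Fin k), F (τ ∘ σ.symm) := by
  rw [← Finset.sum_product']
  symm
  refine Finset.sum_bij
    (fun x hx => ⟨x.1 ∘ x.2.symm, (by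
      simp only [Qset, mem_product, mem_filter, mem_univ, true_and, and_true] at hx
      exact hx.injective.comp x.2.symm.injective)⟩) (fun _ _ => mem_univ _) ?_ ?_ ?_
  · rintro ⟨τ, σ⟩ hx ⟨τ', σ'⟩ hx' h
    simp only [Qset, mem_product, mem_filter, mem_univ, true_and, and_true] at hx hx'
    have h' : τ ∘ σ.symm = τ' ∘ σ'.symm := congrArg DFunLike.coe h
    have hτ : τ = τ' := by
      rw [← hx.range_inj hx', ← σ.symm.surjective.range_comp, h', σ'.symm.surjective.range_comp]
    subst hτ
    have : σ.symm = σ'.symm := Equiv.ext fun l => hx.injective (congrFun h' l)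
    rw [Prod.mk.injEq]
    exact ⟨rfl, Equiv.symm_bijective.injective this⟩
  · intro e _
    refine ⟨(e ∘ Tuple.sort e, Tuple.sort e), ?_, ?_⟩
    · simp only [Qset, mem_product, mem_filter, mem_univ, true_and, and_true]
      exact (Tuple.monotone_sort e).strictMono_of_injective
        (e.injective.comp (Tuple.sort e).injective)
    · ext l
      simp
  · intro x _
    rfl

lemma complEnum_eq_orderEmbOfFin {τ : Fin k → Fin m} (hτ : StrictMono τ) :
    ∃ h : (univ.filter fun j => j ∉ Set.range τ).card = m - k,
      complEnum τ = (univ.filter fun j => j ∉ Set.range τ).orderEmbOfFin h := by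
  have h : (univ.filter fun j => j ∉ Set.range τ).card = m - k := by
    have : (univ.filter fun j => j ∉ Set.range τ) = (univ.image τ)ᶜ := by
      ext j
      simp
    rw [this, card_compl, card_image_of_injective _ hτ.injective]
    simp
  exact ⟨h, by rw [complEnum, dif_pos h]⟩

lemma complEnum_strictMono {τ : Fin k → Fin m} (hτ : StrictMono τ) :
    StrictMono (complEnum τ) := by
  obtain ⟨h, e⟩ := complEnum_eq_orderEmbOfFin hτ
  rw [e]
  exact OrderEmbedding.strictMono _

lemma range_complEnum {τ : Fin k → Fin m} (hτ : StrictMono τ) :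
    Set.range (complEnum τ) = (Set.range τ)ᶜ := by
  obtain ⟨h, e⟩ := complEnum_eq_orderEmbOfFin hτ
  rw [e, range_orderEmbOfFin]
  ext j
  simp

lemma not_exists_eq_complEnum {τ : Fin k → Fin m} (hτ : StrictMono τ) (j : Fin (m - k)) :
    ¬ ∃ l, τ l = complEnum τ j := by
  have h : complEnum τ j ∈ (Set.range τ)ᶜ := range_complEnum hτ ▸ Set.mem_range_self j
  exact h

/-- The splitting of `Fin m` into the range of `τ` and its complement, both in increasing order. -/
def splitEquiv (τ : Fin k → Fin m) (hτ : StrictMono τ) : Fin k ⊕ Fin (m - k) ≃ Fin m :=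
  Equiv.ofBijective (Sum.elim τ (complEnum τ)) (by
    constructor
    · refine hτ.injective.sumElim (complEnum_strictMono hτ).injective fun a b h =>
        not_exists_eq_complEnum hτ b ⟨a, h⟩
    · rw [← Set.range_eq_univ, Set.Sum.elim_range, range_complEnum hτ, Set.union_compl_self])

@[simp]
lemma splitEquiv_inl (τ : Fin k → Fin m) (hτ : StrictMono τ) (l : Fin k) :
    splitEquiv τ hτ (Sum.inl l) = τ l := rfl

@[simp]
lemma splitEquiv_inr (τ : Fin k → Fin m) (hτ : StrictMono τ) (j : Fin (m - k)) :
    splitEquiv τ hτ (Sum.inr j) = complEnum τ j := rfl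

/-- The sign of a permutation increasing on `{0, …, k - 1}` and on `{k, …, m - 1}`. -/
lemma sign_of_strictMono_blocks (π : Perm (Fin m)) (k : ℕ)
    (h₁ : ∀ i j : Fin m, i < j → (j : ℕ) < k → π i < π j)
    (h₂ : ∀ i j : Fin m, k ≤ (i : ℕ) → i < j → π i < π j) :
    Perm.sign π = ∏ i : Fin m, if (i : ℕ) < k then (-1) ^ ((π i : ℕ) + (i : ℕ)) else 1 := by
  rw [Perm.sign_eq_prod_prod_Ioi]
  refine Finset.prod_congr rfl fun i _ => ?_
  split_ifs with hi
  · rw [Finset.prod_ite, prod_const_one, one_mul, prod_const]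
    have hcard : (univ.filter fun j => π j < π i).card = (π i : ℕ) := by
      rw [← Fin.card_Iio (π i), ← Finset.card_map π.toEmbedding]
      congr 1
      ext j
      simp
    have hsplit : (univ.filter fun j => π j < π i) =
        ((Ioi i).filter fun j => ¬ π i < π j) ∪ Iio i := by
      ext j
      simp only [mem_filter, mem_univ, true_and, mem_union, mem_Ioi, mem_Iio, not_lt]
      constructor
      · intro h
        rcases lt_trichotomy i j with hij | hij | hij
        · exact Or.inl ⟨hij, h.le⟩
        · exact absurd h (by simp [hij])
        · exact Or.inr hij
      · rintro (⟨hij, h⟩ | hij)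
        · exact lt_of_le_of_ne h fun he => hij.ne' (π.injective he)
        · exact h₁ j i hij hi
    have hdisj : Disjoint ((Ioi i).filter fun j => ¬ π i < π j) (Iio i) := by
      rw [Finset.disjoint_left]
      intro j hj hj'
      simp only [mem_filter, mem_Ioi, mem_Iio] at hj hj'
      exact lt_asymm hj.1 hj'
    rw [hsplit, card_union_of_disjoint hdisj, Fin.card_Iio] at hcard
    rw [← hcard, add_assoc, pow_add _ _ ((i : ℕ) + i), Even.neg_one_pow ⟨_, rfl⟩, mul_one]
  · refine Finset.prod_eq_one fun j hj => ?_
    rw [if_pos (h₂ i j (not_lt.1 hi) (mem_Ioi.1 hj))]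

/-- The splitting of `Fin m` into the first `k` and the last `m - k` elements. -/
def initialSplit (hkm : k ≤ m) : Fin k ⊕ Fin (m - k) ≃ Fin m :=
  finSumFinEquiv.trans (finCongr (Nat.add_sub_cancel' hkm))

lemma sign_splitEquiv (hkm : k ≤ m) (τ : Fin k → Fin m) (hτ : StrictMono τ) :
    Perm.sign ((initialSplit hkm).symm.trans (splitEquiv τ hτ)) =
      ∏ l : Fin k, (-1) ^ ((τ l : ℕ) + (l : ℕ)) := by
  rw [sign_of_strictMono_blocks _ k, ← Equiv.prod_comp (initialSplit hkm), Fintype.prod_sum_type]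
  · simp [initialSplit]
  · intro i j hij hj
    obtain ⟨a | a, rfl⟩ := (initialSplit hkm).surjective i <;>
      obtain ⟨b | b, rfl⟩ := (initialSplit hkm).surjective j <;>
      simp [initialSplit, -Fin.val_fin_lt, Fin.lt_def] at hij hj ⊢
    · exact hτ hij
    · omega
  · intro i j hi hij
    obtain ⟨a | a, rfl⟩ := (initialSplit hkm).surjective i <;>
      obtain ⟨b | b, rfl⟩ := (initialSplit hkm).surjective j <;>
      simp [initialSplit, -Fin.val_fin_lt, Fin.lt_def] at hij hi ⊢
    · omega
    · omega
    · omega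
    · exact complEnum_strictMono hτ hij

lemma sign_splitEquiv_trans_symm (hkm : k ≤ m) (ρ τ : Fin k → Fin m) (hρ : StrictMono ρ)
    (hτ : StrictMono τ) :
    Perm.sign ((splitEquiv τ hτ).trans (splitEquiv ρ hρ).symm) = (-1) ^ (wt ρ + wt τ) := by
  have h : ((initialSplit hkm).symm.trans ((splitEquiv τ hτ).trans (splitEquiv ρ hρ).symm)).trans
        (initialSplit hkm) =
      ((initialSplit hkm).symm.trans (splitEquiv ρ hρ))⁻¹ *
        ((initialSplit hkm).symm.trans (splitEquiv τ hτ)) := by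
    ext i
    simp [Perm.mul_def, Perm.inv_def]
  rw [← Perm.sign_symm_trans_trans _ (initialSplit hkm), h, Perm.sign_mul, Perm.sign_inv,
    sign_splitEquiv, sign_splitEquiv, wt, wt,
    ← Finset.sum_add_distrib, ← Finset.prod_pow_eq_pow_sum, ← Finset.prod_mul_distrib]
  refine Finset.prod_congr rfl fun l _ => ?_
  rw [← pow_add,
    show (ρ l : ℕ) + l + ((τ l : ℕ) + l) = (ρ l : ℕ) + τ l + (l + l) by ring,
    show (ρ l : ℕ) + 1 + ((τ l : ℕ) + 1) = (ρ l : ℕ) + τ l + (1 + 1) by ring,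
    pow_add _ _ ((l : ℕ) + l), pow_add _ _ (1 + 1), Even.neg_one_pow ⟨_, rfl⟩,
    Even.neg_one_pow ⟨_, rfl⟩]

lemma det_maskM (hkm : k ≤ m) (N : Matrix (Fin m) (Fin m) ℂ) (ρ τ : Fin k → Fin m)
    (hρ : StrictMono ρ) (hτ : StrictMono τ) :
    (maskM N ρ τ).det =
      (-1 : ℂ) ^ (wt ρ + wt τ) * (N.submatrix ρ τ).det * (delSub N ρ τ).det := by
  have hblock : maskM N ρ τ = (Matrix.fromBlocks (N.submatrix ρ τ) 0 0 (delSub N ρ τ)).reindex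
      (splitEquiv ρ hρ) (splitEquiv τ hτ) := by
    rw [← Equiv.symm_apply_eq]
    ext (i | i) (j | j) <;> 
      simp [maskM, delSub, not_exists_eq_complEnum hρ, not_exists_eq_complEnum hτ]
  rw [hblock, Matrix.det_reindex, Matrix.det_fromBlocks_zero₂₁,
    sign_splitEquiv_trans_symm hkm ρ τ hρ hτ]
  push_cast
  ring

/-- Laplace expansion of the determinant along the columns `τ`. -/
lemma det_laplace_columns (hkm : k ≤ m) (N : Matrix (Fin m) (Fin m) ℂ) (τ : Fin k → Fin m)
    (hτ : StrictMono τ) :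
    N.det = ∑ ρ ∈ Qset k m,
      (-1 : ℂ) ^ (wt ρ + wt τ) * (N.submatrix ρ τ).det * (delSub N ρ τ).det := by
  have h : N.det = ∑ ρ ∈ Qset k m, (maskM N ρ τ).det := by
    simp_rw [Matrix.det_apply]
    rw [Finset.sum_comm]
    refine Finset.sum_congr rfl fun σ _ => ?_
    rw [← Finset.smul_sum]
    congr 1
    let s := Tuple.sort (σ ∘ τ)
    have hinj : Function.Injective (σ ∘ τ) := σ.injective.comp hτ.injective
    have hρ : StrictMono ((σ ∘ τ) ∘ s) :=
      (Tuple.monotone_sort (σ ∘ τ)).strictMono_of_injective (hinj.comp s.injective)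
    have hrange : Set.range ((σ ∘ τ) ∘ s) = σ '' Set.range τ := by
      rw [s.surjective.range_comp, Set.range_comp]
    rw [Finset.sum_eq_single ((σ ∘ τ) ∘ s)]
    · refine Finset.prod_congr rfl fun i _ => ?_
      have : (∃ p, ((σ ∘ τ) ∘ s) p = σ i) ↔ ∃ q, τ q = i := by
        change σ i ∈ Set.range ((σ ∘ τ) ∘ s) ↔ _
        rw [hrange, σ.injective.mem_set_image]
        rfl
      simp only [maskM, Matrix.of_apply, this]
      rw [if_neg (by tauto)]
    · intro ρ hρ' hne
      simp only [Qset, mem_filter, mem_univ, true_and] at hρ'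
      have hne' : Set.range ρ ≠ σ '' Set.range τ := by
        rw [← hrange, Ne, hρ'.range_inj hρ]
        exact hne
      obtain ⟨i, hi⟩ : ∃ i, ¬ (σ i ∈ Set.range ρ ↔ i ∈ Set.range τ) := by
        by_contra! hall
        refine hne' (Set.ext fun j => ?_)
        obtain ⟨i, rfl⟩ := σ.surjective j
        rw [hall, σ.injective.mem_set_image]
      refine Finset.prod_eq_zero (mem_univ i) ?_
      simp only [maskM, Matrix.of_apply]
      rw [if_pos]
      simp only [Set.mem_range] at hi
      tauto
    · intro hn
      exact absurd (by simpa [Qset] using hρ) hn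
  rw [h]
  refine Finset.sum_congr rfl fun ρ hρ => det_maskM hkm N ρ τ ?_ hτ
  simpa [Qset] using hρ

end Laplace

/-- The determinant as a continuous multilinear map of the columns. -/
noncomputable def detCols (m : ℕ) : ContinuousMultilinearMap ℂ (fun _ : Fin m => Fin m → ℂ) ℂ where
  toMultilinearMap := (Matrix.detRowAlternating (n := Fin m) (R := ℂ)).toMultilinearMap
  cont := Continuous.matrix_det continuous_id

/-- The map sending `A` to the columns of `A[α|β]`. -/
noncomputable def colsSubmatrix {m n : ℕ} (α β : Fin m → Fin n) :
    Matrix (Fin n) (Fin n) ℂ →L[ℂ] (Fin m → Fin m → ℂ) :=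
  LinearMap.toContinuousLinearMap
    { toFun := fun A q p => A (α p) (β q)
      map_add' := fun _ _ => rfl
      map_smul' := fun _ _ => rfl }

lemma compound_apply_eq {m n : ℕ} (α β : {α : Fin m → Fin n // StrictMono α})
    (A : Matrix (Fin n) (Fin n) ℂ) :
    compound m n A α β = detCols m (colsSubmatrix α.1 β.1 A) :=
  (Matrix.det_transpose _).symm

lemma contDiff_detCols_comp {m n : ℕ} (α β : Fin m → Fin n) :
    ContDiff ℂ ⊤ (detCols m ∘ colsSubmatrix α β) :=
  (detCols m).contDiff.comp (colsSubmatrix α β).contDiff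

lemma iteratedFDeriv_compound_apply {m n k : ℕ} (A : Matrix (Fin n) (Fin n) ℂ)
    (X : Fin k → Matrix (Fin n) (Fin n) ℂ) (α β : {α : Fin m → Fin n // StrictMono α}) :
    iteratedFDeriv ℂ k (compound m n) A X α β =
      iteratedFDeriv ℂ k (detCols m) (colsSubmatrix α.1 β.1 A)
        (fun i => colsSubmatrix α.1 β.1 (X i)) := by
  have hc : ContDiff ℂ ⊤ (compound m n) := by
    refine contDiff_pi.2 fun α => contDiff_pi.2 fun β => ?_
    rw [funext (compound_apply_eq α β)]
    exact contDiff_detCols_comp α.1 β.1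
  let ev : Matrix {α : Fin m → Fin n // StrictMono α} {α : Fin m → Fin n // StrictMono α} ℂ →L[ℂ]
      ℂ := LinearMap.toContinuousLinearMap (Matrix.entryLinearMap ℂ ℂ α β)
  have h₁ := ev.iteratedFDeriv_comp_left (x := A) hc.contDiffAt (i := k) le_top
  have h₂ := (colsSubmatrix α.1 β.1).iteratedFDeriv_comp_right (detCols m).contDiff A (i := k)
    le_top
  have h₃ : ev ∘ compound m n = detCols m ∘ colsSubmatrix α.1 β.1 :=
    funext fun A => compound_apply_eq α β A
  have h₄ := congrArg (fun f => iteratedFDeriv ℂ k f A X) h₃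
  exact (congrArg (fun f => f X) h₁).symm.trans (h₄.trans (congrArg (fun f => f X) h₂))

lemma iteratedFDeriv_detCols_apply {m k : ℕ} (v : Fin m → Fin m → ℂ)
    (w : Fin k → Fin m → Fin m → ℂ) :
    iteratedFDeriv ℂ k (detCols m) v w = ∑ e : Fin k ↪ Fin m,
      (Matrix.of fun p q => if h : ∃ l, e l = q then w (Classical.choose h) q p else v q p).det := by
  rw [ContinuousMultilinearMap.iteratedFDeriv_eq, ContinuousMultilinearMap.iteratedFDeriv,
    _root_.sum_apply]
  refine Finset.sum_congr rfl fun e _ => ?_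
  rw [ContinuousMultilinearMap.iteratedFDerivComponent_apply, ← Matrix.det_transpose]
  change Matrix.det _ = Matrix.det _
  congr 1
  ext q p
  by_cases h : ∃ l, e l = q
  · simp only [Matrix.transpose_apply, Matrix.of_apply, Set.mem_range]
    rw [dif_pos h, dif_pos h]
    refine congrArg (fun l => w l q p) ?_
    rw [Equiv.symm_apply_eq]
    exact Subtype.ext (Classical.choose_spec h).symm
  · simp only [Matrix.transpose_apply, Matrix.of_apply, Set.mem_range]
    rw [dif_neg h, dif_neg h]
    rfl

/-- Jain's formula for the derivative of the `m`-th compound.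
The `(α,β)` entry of `D^k ∧^m(A)(X^1, …, X^k)` equals
`k! ∑_{ρ,τ ∈ Q_{k,m}} (-1)^{|ρ|+|τ|} det(A[α|β](ρ|τ)) Δ(X^1[α|β][ρ|τ], …, X^k[α|β][ρ|τ])`. -/
theorem compound_higher_deriv_entry (n m k : ℕ) (hk : 1 ≤ k) (hkm : k ≤ m) (hmn : m ≤ n)
    (A : Matrix (Fin n) (Fin n) ℂ) (X : Fin k → Matrix (Fin n) (Fin n) ℂ)
    (α β : Fin m → Fin n) (hα : StrictMono α) (hβ : StrictMono β) :
    (iteratedFDeriv ℂ k (compound m n) A (fun i => X i)) ⟨α, hα⟩ ⟨β, hβ⟩ =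
      (k.factorial : ℂ) * ∑ ρ ∈ Qset k m, ∑ τ ∈ Qset k m,
        (-1 : ℂ) ^ (wt ρ + wt τ) * (delSub (A.submatrix α β) ρ τ).det *
          mixedDisc (fun i => ((X i).submatrix α β).submatrix ρ τ) := by

  rw [iteratedFDeriv_compound_apply, iteratedFDeriv_detCols_apply,
    sum_embedding_eq_sum_strictMono_perm (fun e => (Matrix.of fun p q =>
      if h : ∃ l, e l = q then colsSubmatrix α β (X (Classical.choose h)) q p
      else colsSubmatrix α β A q p).det), Finset.sum_comm (s := Qset k m) (t := Qset k m),
    Finset.mul_sum]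
  refine Finset.sum_congr rfl fun τ hτ => ?_
  replace hτ : StrictMono τ := by simpa [Qset] using hτ
  simp_rw [mixedDisc, Finset.mul_sum]
  rw [Finset.sum_comm]
  refine Finset.sum_congr rfl fun σ _ => ?_
  rw [det_laplace_columns hkm _ τ hτ]
  refine Finset.sum_congr rfl fun ρ hρ => ?_
  have hX : (Matrix.submatrix (Matrix.of fun p q =>
      if h : ∃ l, (τ ∘ σ.symm) l = q then colsSubmatrix α β (X (Classical.choose h)) q p
      else colsSubmatrix α β A q p) ρ τ) =
      Matrix.of fun p q => ((X (σ q)).submatrix α β).submatrix ρ τ p q := by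
    ext p q
    have h : ∃ l, (τ ∘ σ.symm) l = τ q := ⟨σ q, by simp⟩
    have hc : Classical.choose h = σ q := by
      have := hτ.injective (Classical.choose_spec h)
      rwa [Equiv.symm_apply_eq] at this
    rw [Matrix.submatrix_apply, Matrix.of_apply, dif_pos h, hc]
    rfl
  have hA : delSub (Matrix.of fun p q =>
      if h : ∃ l, (τ ∘ σ.symm) l = q then colsSubmatrix α β (X (Classical.choose h)) q p
      else colsSubmatrix α β A q p) ρ τ = delSub (A.submatrix α β) ρ τ := by
    ext p q
    have h : ¬ ∃ l, (τ ∘ σ.symm) l = complEnum τ q := by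
      rintro ⟨l, hl⟩
      exact not_exists_eq_complEnum hτ q ⟨_, hl⟩
    rw [delSub, Matrix.submatrix_apply, Matrix.of_apply, dif_neg h]
    rfl
  rw [hX, hA]
  have hk0 : (k.factorial : ℂ) ≠ 0 := by exact_mod_cast k.factorial_ne_zero
  field_simp
end
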